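/- Let G be a finite bipartite graph with color classes A and B, b : V(G) → ℕ, let C be a b-flexible component, and let Z ⊆ V(G) be a b-verifying set. Then exactly one of the following holds: (i) V(C) ∩ A ⊆ Z and V(C) ∩ B ⊆ V(G) ∖ Z; or (ii) V(C) ∩ A ⊆ V(G) ∖ Z and V(C) ∩ B ⊆ Z. -/

import Mathlib

open scoped symmDiff

variable {V : Type} [Fintype V]

/-- `G` is bipartite with color classes `A` and `B`. -/
structure Bipartition (G : SimpleGraph V) (A B : Set V) : Prop where
  disjoint : Disjoint A B
  cover : A ∪ B = Set.univ
  between : ∀ ⦃u v : V⦄, G.Adj u v → (u ∈ A ∧ v ∈ B) ∨ (u ∈ B ∧ v ∈ A)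

/-- `M` is a `b`-matching of `G`: a set of edges of `G` such that each vertex `v` is
incident to at most `b v` edges of `M`. -/
def IsBMatching (G : SimpleGraph V) (b : V → ℕ) (M : Set (Sym2 V)) : Prop :=
  M ⊆ G.edgeSet ∧ ∀ v : V, {e ∈ M | v ∈ e}.ncard ≤ b v

/-- `M` is a maximum `b`-matching of `G`. -/
def IsMaxBMatching (G : SimpleGraph V) (b : V → ℕ) (M : Set (Sym2 V)) : Prop :=
  IsBMatching G b M ∧ ∀ N : Set (Sym2 V), IsBMatching G b N → N.ncard ≤ M.ncard

/-- `E[X]`: the set of edges of `G` with both ends in `X`. -/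
def edgesIn (G : SimpleGraph V) (X : Set V) : Set (Sym2 V) :=
  {e ∈ G.edgeSet | ∀ v ∈ e, v ∈ X}

/-- `b(X) = ∑_{v ∈ X} b v`. -/
noncomputable def bSum (b : V → ℕ) (X : Set V) : ℕ := ∑ᶠ v ∈ X, b v

/-- `Z` is a `b`-verifying set: `b(Zᶜ) + |E[Z]|` equals the size of a maximum `b`-matching. -/
def IsVerifying (G : SimpleGraph V) (b : V → ℕ) (Z : Set V) : Prop :=
  ∃ M : Set (Sym2 V), IsMaxBMatching G b M ∧ bSum b Zᶜ + (edgesIn G Z).ncard = M.ncard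

/-- `v` is `M`-tight. -/
def IsTight (b : V → ℕ) (M : Set (Sym2 V)) (v : V) : Prop :=
  {e ∈ M | v ∈ e}.ncard = b v

/-- `v` is `M`-loose. -/
def IsLoose (b : V → ℕ) (M : Set (Sym2 V)) (v : V) : Prop :=
  {e ∈ M | v ∈ e}.ncard < b v

/-- `M` is a perfect `b`-matching. -/
def IsPerfect (G : SimpleGraph V) (b : V → ℕ) (M : Set (Sym2 V)) : Prop :=
  IsBMatching G b M ∧ ∀ v : V, IsTight b M v

/-- An edge is `b`-inevitable if it is an edge of `G` contained in every maximum `b`-matching. -/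
def IsInevitable (G : SimpleGraph V) (b : V → ℕ) (e : Sym2 V) : Prop :=
  e ∈ G.edgeSet ∧ ∀ M : Set (Sym2 V), IsMaxBMatching G b M → e ∈ M

/-- An edge is `b`-forbidden if it is an edge of `G` contained in no maximum `b`-matching. -/
def IsForbidden (G : SimpleGraph V) (b : V → ℕ) (e : Sym2 V) : Prop :=
  e ∈ G.edgeSet ∧ ∀ M : Set (Sym2 V), IsMaxBMatching G b M → e ∉ M

/-- An edge is `b`-flexible if some maximum `b`-matching contains it and some does not. -/
def IsFlexibleEdge (G : SimpleGraph V) (b : V → ℕ) (e : Sym2 V) : Prop :=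
  (∃ M : Set (Sym2 V), IsMaxBMatching G b M ∧ e ∈ M) ∧
  (∃ M : Set (Sym2 V), IsMaxBMatching G b M ∧ e ∉ M)

/-- The spanning subgraph of `G` whose edges are the `b`-flexible edges. -/
def flexGraph (G : SimpleGraph V) (b : V → ℕ) : SimpleGraph V where
  Adj u v := IsFlexibleEdge G b s(u, v)
  symm := by
    refine ⟨?_⟩
    intro u v h
    rwa [Sym2.eq_swap] at h
  loopless := by
    refine ⟨?_⟩
    intro v h
    obtain ⟨⟨M, hM, heM⟩, -⟩ := h
    exact G.loopless.irrefl v ((G.mem_edgeSet).mp (hM.1.1 heM))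

/-- A `b`-flexible component of `G`, identified with the corresponding connected
component of the spanning subgraph of flexible edges. -/
abbrev FlexComp (G : SimpleGraph V) (b : V → ℕ) := (flexGraph G b).ConnectedComponent

/-- `D(G;b)`: the set of vertices that are `M`-loose for some maximum `b`-matching `M`. -/
def Dset (G : SimpleGraph V) (b : V → ℕ) : Set V :=
  {v | ∃ M : Set (Sym2 V), IsMaxBMatching G b M ∧ IsLoose b M v}

/-- `c` is a `b`-loose flexible component. -/
def LooseComp (G : SimpleGraph V) (b : V → ℕ) (c : FlexComp G b) : Prop :=
  ∃ v ∈ c.supp, v ∈ Dset G b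

/-- `c` is a `b`-inactive flexible component. -/
def InactiveComp (G : SimpleGraph V) (b : V → ℕ) (c : FlexComp G b) : Prop :=
  ∃ v, c.supp = {v} ∧ b v = 0

/-- `c` is a `b`-inconsistent flexible component. -/
def InconsistentComp (G : SimpleGraph V) (b : V → ℕ) (c : FlexComp G b) : Prop :=
  LooseComp G b c ∨ ∃ v, c.supp = {v} ∧ b v = 0 ∧ ∃ u ∈ Dset G b, G.Adj v u

/-- `c` is a `b`-consistent flexible component. -/
def ConsistentComp (G : SimpleGraph V) (b : V → ℕ) (c : FlexComp G b) : Prop :=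
  ¬ InconsistentComp G b c

/-- `c` is a `b`-loose flexible component hooked up by the color class `W`. -/
def LooseHooked (G : SimpleGraph V) (b : V → ℕ) (W : Set V) (c : FlexComp G b) : Prop :=
  ∃ v ∈ c.supp ∩ W, v ∈ Dset G b

/-- `c` is a `b`-inactive flexible component hooked up by the color class `W`. -/
def InactiveHooked (G : SimpleGraph V) (b : V → ℕ) (W : Set V) (c : FlexComp G b) : Prop :=
  ∃ v, c.supp = {v} ∧ b v = 0 ∧ ∃ u ∈ Dset G b ∩ W, G.Adj v u

/-- `c` is a `b`-inconsistent flexible component hooked up by the color class `W`. -/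
def HookedUp (G : SimpleGraph V) (b : V → ℕ) (W : Set V) (c : FlexComp G b) : Prop :=
  LooseHooked G b W c ∨ InactiveHooked G b W c

/-- `X` is separating: empty or a union of vertex sets of `b`-flexible components. -/
def IsSeparating (G : SimpleGraph V) (b : V → ℕ) (X : Set V) : Prop :=
  ∃ S : Set (FlexComp G b), X = ⋃ c ∈ S, c.supp

/-- The number of edges in the list `es` incident to `v` that lie in `M`. -/
noncomputable def edgeDeg (es : List (Sym2 V)) (M : Set (Sym2 V)) (v : V) : ℕ :=
  {e : Sym2 V | e ∈ es ∧ v ∈ e ∧ e ∈ M}.ncard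

/-- `p` is an `M`-wedge path from `x` to `y`. -/
def IsWedgePath {G : SimpleGraph V} (M : Set (Sym2 V)) {x y : V} (p : G.Walk x y) : Prop :=
  p.IsPath ∧ (∀ v ∈ p.support, v ≠ y → edgeDeg p.edges M v = 1) ∧ edgeDeg p.edges M y = 0

/-- `p` is an `M`-saturated path between `x` and `y`. -/
def IsSaturatedPath {G : SimpleGraph V} (M : Set (Sym2 V)) {x y : V} (p : G.Walk x y) : Prop :=
  p.IsPath ∧ ∀ v ∈ p.support, edgeDeg p.edges M v = 1

/-- `p` is an `M`-exposed path between `x` and `y`. -/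
def IsExposedPath {G : SimpleGraph V} (M : Set (Sym2 V)) {x y : V} (p : G.Walk x y) : Prop :=
  p.IsPath ∧ ∀ v ∈ p.support, edgeDeg p.edges Mᶜ v = 1

/-- `p` is an `(M; A, B)`-ascending path from `u` to `v`. -/
def IsAscending {G : SimpleGraph V} (A B : Set V) (M : Set (Sym2 V)) {u v : V}
    (p : G.Walk u v) : Prop :=
  (u ∈ A → v ∈ A → IsWedgePath M p) ∧
  (u ∈ A → v ∈ B → IsSaturatedPath M p) ∧
  (u ∈ B → v ∈ A → IsExposedPath M p) ∧
  (u ∈ B → v ∈ B → IsWedgePath M p.reverse)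

/-- The one-step relation `⊴_A` on `b`-flexible components: `c₁ ⊴_A c₂` iff `c₁ = c₂`, or
there is a `b`-inevitable edge between `V(c₁) ∩ A` and `V(c₂) ∩ B`, or a `b`-forbidden edge
between `V(c₂) ∩ A` and `V(c₁) ∩ B`. -/
def StepRel (G : SimpleGraph V) (b : V → ℕ) (A B : Set V) (c₁ c₂ : FlexComp G b) : Prop :=
  c₁ = c₂ ∨
  (∃ u ∈ c₁.supp ∩ A, ∃ v ∈ c₂.supp ∩ B, IsInevitable G b s(u, v)) ∨
  (∃ u ∈ c₂.supp ∩ A, ∃ v ∈ c₁.supp ∩ B, IsForbidden G b s(u, v))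

/-- The one-step relation `⊴_A` restricted to `b`-consistent flexible components. -/
def ConsStepRel (G : SimpleGraph V) (b : V → ℕ) (A B : Set V) (c₁ c₂ : FlexComp G b) : Prop :=
  ConsistentComp G b c₁ ∧ ConsistentComp G b c₂ ∧ StepRel G b A B c₁ c₂

/-- `I` is a lower ideal of the relation `r`. -/
def IsLowerIdeal {α : Type*} (r : α → α → Prop) (I : Set α) : Prop :=
  ∀ ⦃c d : α⦄, d ∈ I → r c d → c ∈ I

/-- `I` is an upper ideal of the relation `r`. -/
def IsUpperIdeal {α : Type*} (r : α → α → Prop) (I : Set α) : Prop :=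
  ∀ ⦃c d : α⦄, c ∈ I → r c d → d ∈ I

/-! A verifying set `Z` is an optimal dual solution of the maximum `b`-matching problem. The slack
in the weak duality inequality `|M| ≤ b(Zᶜ) + |E[Z]|` is at least `|M ∩ E[Zᶜ]| + |E[Z] \ M|`, so
every maximum `b`-matching contains `E[Z]` and misses `E[Zᶜ]`. Hence neither kind of edge is
flexible: every flexible edge crosses both from `A` to `B` and from `Z` to `Zᶜ`, and membership in
`A ∆ Z` is constant on each flexible component. -/

section SymmDiff

variable {α : Type*} {s t u : Set α}

theorem disjoint_symmDiff_iff_inter_subset :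
    Disjoint s (t ∆ u) ↔ s ∩ t ⊆ u ∧ s ∩ tᶜ ⊆ uᶜ := by
  simp only [Set.disjoint_left, Set.subset_def, Set.mem_symmDiff, Set.mem_inter_iff,
    Set.mem_compl_iff]
  grind

theorem subset_symmDiff_iff_inter_subset :
    s ⊆ t ∆ u ↔ s ∩ t ⊆ uᶜ ∧ s ∩ tᶜ ⊆ u := by
  simp only [Set.subset_def, Set.mem_symmDiff, Set.mem_inter_iff, Set.mem_compl_iff]
  grind

end SymmDiff

section Components

variable {α : Type*} {s : Set α} {H : SimpleGraph α}

theorem mem_iff_of_reachable (hs : ∀ ⦃v w⦄, H.Adj v w → (v ∈ s ↔ w ∈ s)) {v w : α}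
    (h : H.Reachable v w) : v ∈ s ↔ w ∈ s := by
  obtain ⟨p⟩ := h
  induction p with
  | nil => rfl
  | cons hadj _ ih => exact (hs hadj).trans ih

theorem xor_disjoint_supp_subset (hs : ∀ ⦃v w⦄, H.Adj v w → (v ∈ s ↔ w ∈ s))
    (c : H.ConnectedComponent) : Xor (Disjoint c.supp s) (c.supp ⊆ s) := by
  obtain ⟨v, hv⟩ := c.nonempty_supp
  have mem_iff : ∀ w ∈ c.supp, (w ∈ s ↔ v ∈ s) := fun w hw =>
    mem_iff_of_reachable hs (SimpleGraph.ConnectedComponent.exact (hw.trans hv.symm))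
  by_cases hvs : v ∈ s
  · exact Or.inr ⟨fun w hw => (mem_iff w hw).2 hvs, fun hd => Set.disjoint_left.1 hd hv hvs⟩
  · exact Or.inl ⟨Set.disjoint_left.2 fun w hw => mt (mem_iff w hw).1 hvs,
      fun hsub => hvs (hsub hv)⟩

end Components

section Counting

open Finset

variable {α : Type*}

open Classical in
theorem card_filter_mem_sym2 {e : Sym2 α} (he : ¬ e.IsDiag) (s : Finset α) :
    #{v ∈ s | v ∈ e} = (if ∃ v ∈ e, v ∈ s then 1 else 0) + if ∀ v ∈ e, v ∈ s then 1 else 0 := by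
  induction e with | _ v w
  have hvw : v ≠ w := he
  have ends : {x ∈ s | x ∈ s(v, w)} = ({v, w} : Finset α).filter (· ∈ s) := by
    ext x
    simp [and_comm]
  rw [ends]
  by_cases hv : v ∈ s <;> by_cases hw : w ∈ s <;>
    simp [filter_insert, filter_singleton, hv, hw, hvw]

open Classical in
theorem sum_card_filter_mem_sym2 {E : Finset (Sym2 α)} (hE : ∀ e ∈ E, ¬ e.IsDiag)
    (s : Finset α) :
    ∑ v ∈ s, #{e ∈ E | v ∈ e} = #{e ∈ E | ∃ v ∈ e, v ∈ s} + #{e ∈ E | ∀ v ∈ e, v ∈ s} :=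
  calc ∑ v ∈ s, #{e ∈ E | v ∈ e}
    _ = ∑ e ∈ E, #{v ∈ s | v ∈ e} := sum_card_bipartiteAbove_eq_sum_card_bipartiteBelow _
    _ = ∑ e ∈ E, ((if ∃ v ∈ e, v ∈ s then 1 else 0) + if ∀ v ∈ e, v ∈ s then 1 else 0) :=
      sum_congr rfl fun e he => card_filter_mem_sym2 (hE e he) s
    _ = #{e ∈ E | ∃ v ∈ e, v ∈ s} + #{e ∈ E | ∀ v ∈ e, v ∈ s} := by
      rw [sum_add_distrib, card_filter, card_filter]

end Counting

variable {α : Type}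

theorem bSum_mono [Finite α] {b b' : α → ℕ} {X : Set α} (h : ∀ v ∈ X, b v ≤ b' v) :
    bSum b X ≤ bSum b' X := by
  have := Fintype.ofFinite α
  classical
  simp only [bSum, finsum_mem_eq_toFinset_sum]
  exact Finset.sum_le_sum fun v hv => h v (Set.mem_toFinset.1 hv)

theorem bSum_ncard_incident_eq [Finite α] {G : SimpleGraph α} {M : Set (Sym2 α)}
    (hM : M ⊆ G.edgeSet) (X : Set α) :
    bSum (fun v => {e ∈ M | v ∈ e}.ncard) X =
      (M \ edgesIn G Xᶜ).ncard + (M ∩ edgesIn G X).ncard := by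
  have := Fintype.ofFinite α
  classical
  have incident (v : α) : {e ∈ M | v ∈ e} = ({e ∈ M.toFinset | v ∈ e} : Finset (Sym2 α)) := by
    ext e
    simp
  have meeting : M \ edgesIn G Xᶜ =
      ({e ∈ M.toFinset | ∃ v ∈ e, v ∈ X.toFinset} : Finset (Sym2 α)) := by
    ext e
    simpa [edgesIn] using fun he : e ∈ M => Or.inl (hM he)
  have inside : M ∩ edgesIn G X =
      ({e ∈ M.toFinset | ∀ v ∈ e, v ∈ X.toFinset} : Finset (Sym2 α)) := by
    ext e
    simpa [edgesIn] using fun he _ => hM he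
  have not_isDiag : ∀ e ∈ M.toFinset, ¬ e.IsDiag := fun e he =>
    G.not_isDiag_of_mem_edgeSet (hM (Set.mem_toFinset.1 he))
  simp only [bSum, finsum_mem_eq_toFinset_sum, incident, meeting, inside, Set.ncard_coe_finset]
  -- The two sides decide `∃ v ∈ e, _` and `∀ v ∈ e, _` by different instances.
  convert sum_card_filter_mem_sym2 not_isDiag X.toFinset

theorem IsBMatching.ncard_add_slack_le [Finite α] {G : SimpleGraph α} {b : α → ℕ}
    {M : Set (Sym2 α)} (hM : IsBMatching G b M) (Z : Set α) :
    M.ncard + (M ∩ edgesIn G Zᶜ).ncard + (edgesIn G Z \ M).ncard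
      ≤ bSum b Zᶜ + (edgesIn G Z).ncard := by
  have hdeg := (bSum_ncard_incident_eq hM.1 Zᶜ).symm.trans_le (bSum_mono fun v _ => hM.2 v)
  rw [compl_compl] at hdeg
  have hMsplit := Set.ncard_inter_add_ncard_sdiff_eq_ncard M (edgesIn G Z)
  have hEsplit := Set.ncard_inter_add_ncard_sdiff_eq_ncard (edgesIn G Z) M
  rw [Set.inter_comm] at hEsplit
  omega

namespace IsVerifying

variable {G : SimpleGraph α} {b : α → ℕ} {Z : Set α} {M : Set (Sym2 α)}

theorem bSum_add_ncard_eq (hZ : IsVerifying G b Z) (hM : IsMaxBMatching G b M) :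
    bSum b Zᶜ + (edgesIn G Z).ncard = M.ncard := by
  obtain ⟨N, hN, hcard⟩ := hZ
  exact hcard.trans ((hM.2 N hN.1).antisymm (hN.2 M hM.1))

theorem edgesIn_subset [Finite α] (hZ : IsVerifying G b Z) (hM : IsMaxBMatching G b M) :
    edgesIn G Z ⊆ M := by
  have hslack := hM.1.ncard_add_slack_le Z
  have heq := hZ.bSum_add_ncard_eq hM
  exact Set.sdiff_eq_empty.1 ((Set.ncard_eq_zero).1 (by omega))

theorem disjoint_edgesIn_compl [Finite α] (hZ : IsVerifying G b Z) (hM : IsMaxBMatching G b M) :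
    Disjoint M (edgesIn G Zᶜ) := by
  have hslack := hM.1.ncard_add_slack_le Z
  have heq := hZ.bSum_add_ncard_eq hM
  exact Set.disjoint_iff_inter_eq_empty.2 ((Set.ncard_eq_zero).1 (by omega))

theorem mem_iff_notMem_of_flexGraph_adj [Finite α] (hZ : IsVerifying G b Z) {u v : α}
    (huv : (flexGraph G b).Adj u v) : u ∈ Z ↔ v ∉ Z := by
  obtain ⟨⟨M, hM, huvM⟩, N, hN, huvN⟩ := huv
  have huvG : s(u, v) ∈ G.edgeSet := hM.1.1 huvM
  have not_both_in : ¬ (u ∈ Z ∧ v ∈ Z) := fun h =>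
    huvN (hZ.edgesIn_subset hN ⟨huvG, by simpa using h⟩)
  have not_both_out : ¬ (u ∉ Z ∧ v ∉ Z) := fun h =>
    Set.disjoint_left.1 (hZ.disjoint_edgesIn_compl hM) huvM ⟨huvG, by simpa using h⟩
  tauto

end IsVerifying

theorem flexGraph_le (G : SimpleGraph α) (b : α → ℕ) : flexGraph G b ≤ G :=
  fun _ _ ⟨⟨_, hM, huvM⟩, _⟩ => hM.1.1 huvM

namespace Bipartition

variable {G : SimpleGraph α} {A B : Set α}

theorem compl_left_eq (hG : Bipartition G A B) : Aᶜ = B :=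
  IsCompl.compl_eq ⟨hG.disjoint, codisjoint_iff.2 hG.cover⟩

theorem mem_left_iff_notMem_of_adj (hG : Bipartition G A B) {u v : α} (huv : G.Adj u v) :
    u ∈ A ↔ v ∉ A := by
  have := hG.between huv
  simp only [← hG.compl_left_eq, Set.mem_compl_iff] at this
  tauto

theorem mem_symmDiff_iff_of_flexGraph_adj [Finite α] (hG : Bipartition G A B) {b : α → ℕ}
    {Z : Set α} (hZ : IsVerifying G b Z) {u v : α} (huv : (flexGraph G b).Adj u v) :
    u ∈ A ∆ Z ↔ v ∈ A ∆ Z := by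
  have hA := hG.mem_left_iff_notMem_of_adj (flexGraph_le G b huv)
  have hZ := hZ.mem_iff_notMem_of_flexGraph_adj huv
  simp only [Set.mem_symmDiff, hA, hZ]
  tauto

end Bipartition

/-- For every `b`-flexible component `C` and `b`-verifying set `Z`, exactly one of the
following holds: `V(C) ∩ A ⊆ Z` and `V(C) ∩ B ⊆ Zᶜ`; or `V(C) ∩ A ⊆ Zᶜ` and
`V(C) ∩ B ⊆ Z`. -/
theorem stmt_17 (G : SimpleGraph V) (A B : Set V) (hG : Bipartition G A B) (b : V → ℕ)
    (c : FlexComp G b) (Z : Set V) (hZ : IsVerifying G b Z) :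
    Xor' (c.supp ∩ A ⊆ Z ∧ c.supp ∩ B ⊆ Zᶜ) (c.supp ∩ A ⊆ Zᶜ ∧ c.supp ∩ B ⊆ Z) := by
  rw [← hG.compl_left_eq, ← disjoint_symmDiff_iff_inter_subset,
    ← subset_symmDiff_iff_inter_subset]
  exact xor_disjoint_supp_subset (fun _ _ => hG.mem_symmDiff_iff_of_flexGraph_adj hZ) c
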